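/- Fix φ = (φ₁,φ₂,φ₃) ∈ ℝ³ and let A_φ be the quotient of the free associative ℂ-algebra on generators x₀, x₁, x₂, x₃ by the two-sided ideal generated by the six elements, for each cyclic permutation (k,ℓ,m) of (1,2,3): sin(φ_k)·(x₀x_k + x_kx₀) − i·cos(φ_ℓ − φ_m)·(x_ℓx_m − x_mx_ℓ) and cos(φ_k)·(x₀x_k − x_kx₀) − i·sin(φ_ℓ − φ_m)·(x_ℓx_m + x_mx_ℓ). Then the images in A_φ of Q₁ = x₀² + x₁² + x₂² + x₃² and of Q₂ = (1/2)·Σ_{k=1}^{3} sin(2φ_k)·cos(−φ_k + φ_ℓ + φ_m)·x_k² are central, i.e. commute with every element of A_φ. -/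

import Mathlib

/-- The four generators `x₀, x₁, x₂, x₃` of the free algebra. -/
noncomputable def x12 : Fin 4 → FreeAlgebra ℂ (Fin 4) := fun i => FreeAlgebra.ι ℂ i

/-- The relations of `C_alg(ℝ⁴_φ)`: for each cyclic permutation `(k,ℓ,m)` of
`(1,2,3)`, `sin φ_k (x₀x_k + x_kx₀) = i cos(φ_ℓ−φ_m)(x_ℓx_m − x_mx_ℓ)` and
`cos φ_k (x₀x_k − x_kx₀) = i sin(φ_ℓ−φ_m)(x_ℓx_m + x_mx_ℓ)`. -/
def rel12 (φ1 φ2 φ3 : ℝ) :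
    FreeAlgebra ℂ (Fin 4) → FreeAlgebra ℂ (Fin 4) → Prop := fun a b =>
  b = 0 ∧
  (a = (Real.sin φ1 : ℂ) • (x12 0 * x12 1 + x12 1 * x12 0)
        - (Complex.I * (Real.cos (φ2 - φ3) : ℂ)) • (x12 2 * x12 3 - x12 3 * x12 2) ∨
   a = (Real.sin φ2 : ℂ) • (x12 0 * x12 2 + x12 2 * x12 0)
        - (Complex.I * (Real.cos (φ3 - φ1) : ℂ)) • (x12 3 * x12 1 - x12 1 * x12 3) ∨
   a = (Real.sin φ3 : ℂ) • (x12 0 * x12 3 + x12 3 * x12 0)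
        - (Complex.I * (Real.cos (φ1 - φ2) : ℂ)) • (x12 1 * x12 2 - x12 2 * x12 1) ∨
   a = (Real.cos φ1 : ℂ) • (x12 0 * x12 1 - x12 1 * x12 0)
        - (Complex.I * (Real.sin (φ2 - φ3) : ℂ)) • (x12 2 * x12 3 + x12 3 * x12 2) ∨
   a = (Real.cos φ2 : ℂ) • (x12 0 * x12 2 - x12 2 * x12 0)
        - (Complex.I * (Real.sin (φ3 - φ1) : ℂ)) • (x12 3 * x12 1 + x12 1 * x12 3) ∨
   a = (Real.cos φ3 : ℂ) • (x12 0 * x12 3 - x12 3 * x12 0)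
        - (Complex.I * (Real.sin (φ1 - φ2) : ℂ)) • (x12 1 * x12 2 + x12 2 * x12 1))

/-!
For `(k, ℓ, m)` cyclic, the relations match a multiple of the anticommutator of one of the pairs
`{x₀, x_k}`, `{x_ℓ, x_m}` with a multiple of the commutator of the other. Since
`⁅a, b ^ 2⁆ = ⁅a * b + b * a, b⁆ = ⁅a, b⁆ * b + b * ⁅a, b⁆`, every commutator `⁅a, b ^ 2⁆` of
generators can thus be rewritten in two ways, and suitable combinations of these turn it into
Jordan triples `u * v * w + w * v * u`. By the addition formulas their coefficients are sines of
the angles `-φ_k + φ_ℓ + φ_m` for `Q₁`, and products of cosines of these angles or of sines of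
the angles `2 φ_k` for `Q₂`; in the sum over `b` the triples then cancel in pairs.
-/

attribute [local instance] LieRing.ofAssociativeRing

section JordanTriple

variable {A : Type*} [NonUnitalNonAssocSemiring A]

/-- The Jordan triple product `a * b * c + c * b * a`, which carries no factor `1 / 2` here. -/
def jordanTriple (a b c : A) : A := a * b * c + c * b * a

lemma jordanTriple_comm (a b c : A) : jordanTriple a b c = jordanTriple c b a :=
  add_comm _ _

end JordanTriple

section LieSq

variable {R A : Type*} [CommRing R] [Ring A] [Algebra R A]

lemma lie_sq_eq_anticommutator_lie (a b : A) : ⁅a, b ^ 2⁆ = ⁅a * b + b * a, b⁆ := by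
  simp only [Ring.lie_def]
  noncomm_ring

lemma lie_sq_eq_lie_mul_add_mul_lie (a b : A) : ⁅a, b ^ 2⁆ = ⁅a, b⁆ * b + b * ⁅a, b⁆ := by
  simp only [Ring.lie_def]
  noncomm_ring

lemma lie_lie_eq_jordanTriple_sub (a b c : A) :
    ⁅⁅a, b⁆, c⁆ = jordanTriple a b c - jordanTriple b a c := by
  simp only [Ring.lie_def, jordanTriple]
  noncomm_ring

lemma anticommutator_anticommutator_eq_jordanTriple_add (a b c : A) :
    (a * b + b * a) * c + c * (a * b + b * a) = jordanTriple a b c + jordanTriple b a c := by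
  simp only [jordanTriple]
  noncomm_ring

variable {p q p' q' : R} {a b c d : A}

lemma smul_lie_sq_right (hanti : p • (a * b + b * a) = q • ⁅c, d⁆)
    (hcomm : p' • ⁅a, b⁆ = q' • (c * d + d * c)) (r r' : R) :
    (r * p + r' * p') • ⁅a, b ^ 2⁆ =
      (r * q + r' * q') • jordanTriple c d b - (r * q - r' * q') • jordanTriple d c b := by
  have from_anti : p • ⁅a, b ^ 2⁆ = q • (jordanTriple c d b - jordanTriple d c b) := by
    rw [lie_sq_eq_anticommutator_lie, ← smul_lie p _ b, hanti, smul_lie q _ b,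
      lie_lie_eq_jordanTriple_sub]
  have from_comm : p' • ⁅a, b ^ 2⁆ = q' • (jordanTriple c d b + jordanTriple d c b) := by
    rw [lie_sq_eq_lie_mul_add_mul_lie, smul_add, ← smul_mul_assoc, ← mul_smul_comm, hcomm,
      smul_mul_assoc, mul_smul_comm, ← smul_add,
      anticommutator_anticommutator_eq_jordanTriple_add]
  rw [add_smul, mul_smul, mul_smul, from_anti, from_comm]
  module

lemma smul_lie_sq_left (hanti : p • (a * b + b * a) = q • ⁅c, d⁆)
    (hcomm : p' • ⁅a, b⁆ = q' • (c * d + d * c)) (r r' : R) :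
    (r * p + r' * p') • ⁅b, a ^ 2⁆ =
      (r * q - r' * q') • jordanTriple c d a - (r * q + r' * q') • jordanTriple d c a := by
  have hanti' : p • (b * a + a * b) = q • ⁅c, d⁆ := by rwa [add_comm]
  have hcomm' : p' • ⁅b, a⁆ = (-q') • (c * d + d * c) := by
    rw [← lie_skew, smul_neg, hcomm, neg_smul]
  have key := smul_lie_sq_right hanti' hcomm' r r'
  rwa [mul_neg, ← sub_eq_add_neg, sub_neg_eq_add] at key

end LieSq

section CyclicSum

lemma sum_fin_three_eq_add_add {M : Type*} [AddCommMonoid M] (f : Fin 3 → M) (k : Fin 3) :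
    ∑ j, f j = f k + f (k + 1) + f (k + 2) := by
  rw [← Equiv.sum_comp (Equiv.addLeft k), Fin.sum_univ_three]
  simp

lemma sum_cyclic_sub_eq_zero {M : Type*} [AddCommGroup M] (f : Fin 3 → M) :
    ∑ k, (f (k + 2) - f (k + 1)) = 0 := by
  rw [Finset.sum_sub_distrib, sub_eq_zero]
  exact (Equiv.sum_comp (Equiv.addRight 2) f).trans (Equiv.sum_comp (Equiv.addRight 1) f).symm

end CyclicSum

open Complex

section Angles

/-- The angle `-φ_k + φ_ℓ + φ_m`, where `(k, ℓ, m) = (k, k + 1, k + 2)` is the cyclic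
permutation of the three indices, taken modulo `3`, that starts at `k`. -/
def oppositeAngle (φ : Fin 3 → ℂ) (k : Fin 3) : ℂ := -φ k + φ (k + 1) + φ (k + 2)

variable (φ : Fin 3 → ℂ) (k : Fin 3)

lemma oppositeAngle_add_one : oppositeAngle φ (k + 1) = φ k - (φ (k + 1) - φ (k + 2)) := by
  simp only [oppositeAngle, add_assoc, Fin.reduceAdd, add_zero]
  ring

lemma oppositeAngle_add_two : oppositeAngle φ (k + 2) = φ k + (φ (k + 1) - φ (k + 2)) := by
  simp only [oppositeAngle, add_assoc, Fin.reduceAdd, add_zero]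
  ring

lemma neg_I_mul_sin_add_neg_I_mul_cos (θ : ℂ) :
    -I * sin θ * (I * sin θ) + -I * cos θ * (I * cos θ) = 1 := by
  linear_combination sin_sq_add_cos_sq θ - (sin θ ^ 2 + cos θ ^ 2) * I_mul_I

end Angles

/-- The defining relations of the noncommutative space `ℝ⁴_φ`, imposed on a family
`x₀, x₁, x₂, x₃` in an arbitrary algebra and with complex angles. The indices `1, 2, 3` are
encoded by `Fin 3`, whose cyclic addition provides the cyclic permutations `(k, k + 1, k + 2)`. -/
structure NoncommFourSpaceRelations {A : Type*} [Ring A] [Algebra ℂ A]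
    (φ : Fin 3 → ℂ) (x₀ : A) (x : Fin 3 → A) : Prop where
  anticommutator_eq (k : Fin 3) : sin (φ k) • (x₀ * x k + x k * x₀) =
    (I * cos (φ (k + 1) - φ (k + 2))) • ⁅x (k + 1), x (k + 2)⁆
  lie_eq (k : Fin 3) : cos (φ k) • ⁅x₀, x k⁆ =
    (I * sin (φ (k + 1) - φ (k + 2))) • (x (k + 1) * x (k + 2) + x (k + 2) * x (k + 1))

/-- The quadratic element `Q₁ = x₀² + x₁² + x₂² + x₃²`. -/
def sphericalCasimir {A : Type*} [Semiring A] (x₀ : A) (x : Fin 3 → A) : A :=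
  x₀ ^ 2 + ∑ k, x k ^ 2

/-- The coefficient of `x_k²` in `Q₂`. -/
noncomputable def twistedCoeff (φ : Fin 3 → ℂ) (k : Fin 3) : ℂ :=
  sin (2 * φ k) * cos (oppositeAngle φ k) / 2

/-- The quadratic element `Q₂ = ½ ∑ sin(2φ_k) cos(-φ_k + φ_ℓ + φ_m) x_k²`. -/
noncomputable def twistedCasimir {A : Type*} [Semiring A] [Algebra ℂ A]
    (φ : Fin 3 → ℂ) (x : Fin 3 → A) : A :=
  ∑ k, twistedCoeff φ k • x k ^ 2

namespace NoncommFourSpaceRelations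

variable {A : Type*} [Ring A] [Algebra ℂ A] {φ : Fin 3 → ℂ} {x₀ : A} {x : Fin 3 → A}

lemma lie_zero_sq (h : NoncommFourSpaceRelations φ x₀ x) (k : Fin 3) :
    ⁅x₀, x k ^ 2⁆ =
      (I * sin (oppositeAngle φ (k + 2))) • jordanTriple (x (k + 1)) (x (k + 2)) (x k) -
      (I * sin (oppositeAngle φ (k + 1))) • jordanTriple (x (k + 2)) (x (k + 1)) (x k) := by
  have key := smul_lie_sq_right (h.anticommutator_eq k) (h.lie_eq k) (sin (φ k)) (cos (φ k))
  rw [oppositeAngle_add_one, oppositeAngle_add_two, sin_add (φ k), sin_sub (φ k)]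
  rw [← sq, ← sq, sin_sq_add_cos_sq, one_smul] at key
  rw [key]
  module

lemma twistedCoeff_smul_lie_zero_sq (h : NoncommFourSpaceRelations φ x₀ x) (k : Fin 3) :
    twistedCoeff φ k • ⁅x₀, x k ^ 2⁆ =
      (I / 2 * cos (oppositeAngle φ k) * cos (oppositeAngle φ (k + 1))) •
        jordanTriple (x (k + 1)) (x (k + 2)) (x k) -
      (I / 2 * cos (oppositeAngle φ k) * cos (oppositeAngle φ (k + 2))) •
        jordanTriple (x (k + 2)) (x (k + 1)) (x k) := by
  have key := smul_lie_sq_right (h.anticommutator_eq k) (h.lie_eq k)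
    (cos (oppositeAngle φ k) / 2 * cos (φ k)) (cos (oppositeAngle φ k) / 2 * sin (φ k))
  rw [twistedCoeff, sin_two_mul, oppositeAngle_add_one, oppositeAngle_add_two, cos_add (φ k),
    cos_sub (φ k)]
  convert key using 1
  · module
  · module

lemma lie_zero_sphericalCasimir (h : NoncommFourSpaceRelations φ x₀ x) :
    ⁅x₀, sphericalCasimir x₀ x⁆ = 0 := by
  rw [sphericalCasimir, lie_add, commute_iff_lie_eq.mp ((Commute.refl x₀).pow_right 2), zero_add,
    lie_sum]
  convert sum_cyclic_sub_eq_zero fun k =>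
    (I * sin (oppositeAngle φ k)) • jordanTriple (x (k + 1)) (x k) (x (k + 2)) using 2 with k
  rw [h.lie_zero_sq]
  simp only [add_assoc, Fin.reduceAdd, add_zero]
  rw [jordanTriple_comm (x (k + 1))]

lemma lie_zero_twistedCasimir (h : NoncommFourSpaceRelations φ x₀ x) :
    ⁅x₀, twistedCasimir φ x⁆ = 0 := by
  rw [twistedCasimir, lie_sum]
  convert sum_cyclic_sub_eq_zero fun k =>
    (I / 2 * cos (oppositeAngle φ (k + 1)) * cos (oppositeAngle φ (k + 2))) •
      jordanTriple (x (k + 1)) (x k) (x (k + 2)) using 2 with k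
  rw [lie_smul (twistedCoeff φ k) x₀ (x k ^ 2), h.twistedCoeff_smul_lie_zero_sq]
  simp only [add_assoc, Fin.reduceAdd, add_zero]
  rw [jordanTriple_comm (x (k + 1)), mul_right_comm _ (cos (oppositeAngle φ (k + 2)))]

lemma lie_sq_zero (h : NoncommFourSpaceRelations φ x₀ x) (k : Fin 3) :
    ⁅x k, x₀ ^ 2⁆ =
      (I * sin (oppositeAngle φ (k + 1))) • jordanTriple (x (k + 1)) (x (k + 2)) x₀ -
      (I * sin (oppositeAngle φ (k + 2))) • jordanTriple (x (k + 2)) (x (k + 1)) x₀ := by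
  have key := smul_lie_sq_left (h.anticommutator_eq k) (h.lie_eq k) (sin (φ k)) (cos (φ k))
  rw [oppositeAngle_add_one, oppositeAngle_add_two, sin_add (φ k), sin_sub (φ k)]
  rw [← sq, ← sq, sin_sq_add_cos_sq, one_smul] at key
  rw [key]
  module

lemma lie_add_one_add_two_sq (h : NoncommFourSpaceRelations φ x₀ x) (k : Fin 3) :
    ⁅x (k + 1), x (k + 2) ^ 2⁆ =
      -(I * sin (oppositeAngle φ (k + 2))) • jordanTriple x₀ (x k) (x (k + 2)) -
      (I * sin (oppositeAngle φ (k + 1))) • jordanTriple (x k) x₀ (x (k + 2)) := by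
  have key := smul_lie_sq_right (h.lie_eq k).symm (h.anticommutator_eq k).symm
    (-I * sin (φ (k + 1) - φ (k + 2))) (-I * cos (φ (k + 1) - φ (k + 2)))
  rw [oppositeAngle_add_one, oppositeAngle_add_two, sin_add (φ k), sin_sub (φ k)]
  rw [neg_I_mul_sin_add_neg_I_mul_cos, one_smul] at key
  rw [key]
  module

lemma lie_add_two_add_one_sq (h : NoncommFourSpaceRelations φ x₀ x) (k : Fin 3) :
    ⁅x (k + 2), x (k + 1) ^ 2⁆ =
      (I * sin (oppositeAngle φ (k + 1))) • jordanTriple x₀ (x k) (x (k + 1)) +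
      (I * sin (oppositeAngle φ (k + 2))) • jordanTriple (x k) x₀ (x (k + 1)) := by
  have key := smul_lie_sq_left (h.lie_eq k).symm (h.anticommutator_eq k).symm
    (-I * sin (φ (k + 1) - φ (k + 2))) (-I * cos (φ (k + 1) - φ (k + 2)))
  rw [oppositeAngle_add_one, oppositeAngle_add_two, sin_add (φ k), sin_sub (φ k)]
  rw [neg_I_mul_sin_add_neg_I_mul_cos, one_smul] at key
  rw [key]
  module

lemma twistedCoeff_smul_lie_add_one_add_two_sq
    (h : NoncommFourSpaceRelations φ x₀ x) (k : Fin 3) :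
    twistedCoeff φ (k + 2) • ⁅x (k + 1), x (k + 2) ^ 2⁆ =
      -(I / 2 * sin (2 * φ k) * sin (2 * φ (k + 2))) • jordanTriple (x k) x₀ (x (k + 2)) := by
  have key := smul_lie_sq_right (h.lie_eq k).symm (h.anticommutator_eq k).symm
    -- These weights cancel the triple `x₀ * x k * x (k + 2)` and double the other one.
    (I * sin (φ k) * (sin (φ (k + 2)) * cos (φ (k + 2))))
    (-I * cos (φ k) * (sin (φ (k + 2)) * cos (φ (k + 2))))
  rw [twistedCoeff, oppositeAngle_add_two, cos_add (φ k), sin_two_mul, sin_two_mul]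
  convert key using 1
  · congr 1
    linear_combination sin (φ (k + 2)) * cos (φ (k + 2)) *
      (cos (φ k) * cos (φ (k + 1) - φ (k + 2)) -
        sin (φ k) * sin (φ (k + 1) - φ (k + 2))) * I_mul_I
  · module

lemma twistedCoeff_smul_lie_add_two_add_one_sq
    (h : NoncommFourSpaceRelations φ x₀ x) (k : Fin 3) :
    twistedCoeff φ (k + 1) • ⁅x (k + 2), x (k + 1) ^ 2⁆ =
      (I / 2 * sin (2 * φ k) * sin (2 * φ (k + 1))) • jordanTriple (x k) x₀ (x (k + 1)) := by
  have key := smul_lie_sq_left (h.lie_eq k).symm (h.anticommutator_eq k).symm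
    (-I * sin (φ k) * (sin (φ (k + 1)) * cos (φ (k + 1))))
    (-I * cos (φ k) * (sin (φ (k + 1)) * cos (φ (k + 1))))
  rw [twistedCoeff, oppositeAngle_add_one, cos_sub (φ k), sin_two_mul, sin_two_mul]
  convert key using 1
  · congr 1
    linear_combination sin (φ (k + 1)) * cos (φ (k + 1)) *
      (cos (φ k) * cos (φ (k + 1) - φ (k + 2)) +
        sin (φ k) * sin (φ (k + 1) - φ (k + 2))) * I_mul_I
  · module

lemma lie_sphericalCasimir (h : NoncommFourSpaceRelations φ x₀ x) (k : Fin 3) :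
    ⁅x k, sphericalCasimir x₀ x⁆ = 0 := by
  have lie_succ := h.lie_add_one_add_two_sq (k + 2)
  have lie_pred := h.lie_add_two_add_one_sq (k + 1)
  simp only [add_assoc, Fin.reduceAdd, add_zero] at lie_succ lie_pred
  rw [sphericalCasimir, sum_fin_three_eq_add_add _ k, lie_add, lie_add, lie_add,
    commute_iff_lie_eq.mp ((Commute.refl (x k)).pow_right 2), h.lie_sq_zero, lie_succ, lie_pred,
    jordanTriple_comm (x (k + 1)) _ x₀, jordanTriple_comm (x (k + 2)) _ x₀,
    jordanTriple_comm (x (k + 2)) x₀]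
  module

lemma lie_twistedCasimir (h : NoncommFourSpaceRelations φ x₀ x) (k : Fin 3) :
    ⁅x k, twistedCasimir φ x⁆ = 0 := by
  have lie_succ := h.twistedCoeff_smul_lie_add_one_add_two_sq (k + 2)
  have lie_pred := h.twistedCoeff_smul_lie_add_two_add_one_sq (k + 1)
  simp only [add_assoc, Fin.reduceAdd, add_zero] at lie_succ lie_pred
  rw [twistedCasimir, sum_fin_three_eq_add_add _ k, lie_add, lie_add, lie_smul _ (x k) (x k ^ 2),
    lie_smul _ (x k) (x (k + 1) ^ 2), lie_smul _ (x k) (x (k + 2) ^ 2),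
    commute_iff_lie_eq.mp ((Commute.refl (x k)).pow_right 2), lie_succ, lie_pred,
    jordanTriple_comm (x (k + 2))]
  module

end NoncommFourSpaceRelations

theorem stmt_12_general {A : Type*} [Ring A] [Algebra ℂ A] {φ : Fin 3 → ℂ} {x₀ : A}
    {x : Fin 3 → A} (h : NoncommFourSpaceRelations φ x₀ x) {y : A}
    (hy : y ∈ Algebra.adjoin ℂ (insert x₀ (Set.range x))) :
    Commute (sphericalCasimir x₀ x) y ∧ Commute (twistedCasimir φ x) y := by
  constructor <;> refine Algebra.commute_of_mem_adjoin_of_forall_mem_commute hy ?_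
  · rintro _ (rfl | ⟨k, rfl⟩)
    · exact (commute_iff_lie_eq.mpr h.lie_zero_sphericalCasimir).symm
    · exact (commute_iff_lie_eq.mpr (h.lie_sphericalCasimir k)).symm
  · rintro _ (rfl | ⟨k, rfl⟩)
    · exact (commute_iff_lie_eq.mpr h.lie_zero_twistedCasimir).symm
    · exact (commute_iff_lie_eq.mpr (h.lie_twistedCasimir k)).symm

lemma noncommFourSpaceRelations_mkAlgHom (φ1 φ2 φ3 : ℝ) :
    NoncommFourSpaceRelations ![(φ1 : ℂ), φ2, φ3]
      (RingQuot.mkAlgHom ℂ (rel12 φ1 φ2 φ3) (x12 0))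
      fun k => RingQuot.mkAlgHom ℂ (rel12 φ1 φ2 φ3) (x12 k.succ) := by
  have mk_eq_zero {a} (ha : rel12 φ1 φ2 φ3 a 0) : RingQuot.mkAlgHom ℂ (rel12 φ1 φ2 φ3) a = 0 := by
    rw [RingQuot.mkAlgHom_rel ℂ ha, map_zero]
  constructor <;> intro k <;> rw [← sub_eq_zero] <;> fin_cases k
  · simpa [Ring.lie_def] using mk_eq_zero ⟨rfl, .inl rfl⟩
  · simpa [Ring.lie_def] using mk_eq_zero ⟨rfl, .inr (.inl rfl)⟩
  · simpa [Ring.lie_def] using mk_eq_zero ⟨rfl, .inr (.inr (.inl rfl))⟩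
  · simpa [Ring.lie_def] using mk_eq_zero ⟨rfl, .inr (.inr (.inr (.inl rfl)))⟩
  · simpa [Ring.lie_def] using mk_eq_zero ⟨rfl, .inr (.inr (.inr (.inr (.inl rfl))))⟩
  · simpa [Ring.lie_def] using mk_eq_zero ⟨rfl, .inr (.inr (.inr (.inr (.inr rfl))))⟩

lemma adjoin_range_mkAlgHom_ι {R X : Type*} [CommSemiring R]
    (r : FreeAlgebra R X → FreeAlgebra R X → Prop) :
    Algebra.adjoin R (Set.range fun i => RingQuot.mkAlgHom R r (FreeAlgebra.ι R i)) = ⊤ := by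
  rw [← Function.comp_def, Set.range_comp, Algebra.adjoin_image, FreeAlgebra.adjoin_range_ι,
    Algebra.map_top, AlgHom.range_eq_top]
  exact RingQuot.mkAlgHom_surjective R r

/-- The images of `Q₁ = Σ x_μ²` and
`Q₂ = ½ Σ sin(2φ_k) cos(−φ_k+φ_ℓ+φ_m) x_k²` are central in `C_alg(ℝ⁴_φ)`. -/
theorem stmt_12 (φ1 φ2 φ3 : ℝ) :
    (∀ y : RingQuot (rel12 φ1 φ2 φ3),
      Commute (RingQuot.mkAlgHom ℂ (rel12 φ1 φ2 φ3)
        (x12 0 ^ 2 + x12 1 ^ 2 + x12 2 ^ 2 + x12 3 ^ 2)) y) ∧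
    (∀ y : RingQuot (rel12 φ1 φ2 φ3),
      Commute (RingQuot.mkAlgHom ℂ (rel12 φ1 φ2 φ3)
        (((Real.sin (2 * φ1) * Real.cos (-φ1 + φ2 + φ3) / 2 : ℝ) : ℂ) • x12 1 ^ 2
          + ((Real.sin (2 * φ2) * Real.cos (-φ2 + φ3 + φ1) / 2 : ℝ) : ℂ) • x12 2 ^ 2
          + ((Real.sin (2 * φ3) * Real.cos (-φ3 + φ1 + φ2) / 2 : ℝ) : ℂ) • x12 3 ^ 2)) y) := by
  have generate := adjoin_range_mkAlgHom_ι (rel12 φ1 φ2 φ3)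
  rw [Fin.range_fin_succ] at generate
  have central (y) := stmt_12_general (noncommFourSpaceRelations_mkAlgHom φ1 φ2 φ3)
    (generate.ge (Algebra.mem_top (x := y)))
  simpa [sphericalCasimir, twistedCasimir, twistedCoeff, oppositeAngle, Fin.sum_univ_three,
    add_assoc, forall_and] using central
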